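/- Let S(l,3) be the signed double star consisting of a positive central edge z₁z₂, together with l positive pendant edges z₁v₁,…,z₁v_l and two negative pendant edges z₁u₁, z₁u₂ attached at z₁, and 3 positive pendant edges z₂w₁, z₂w₂, z₂w₃ attached at z₂, where l ≥ 2 and l is even. Then every additively graceful labeling g of S(l,3) satisfies g(z₁)=0, {g(u₁),g(u₂)}={1,2}, g(z₂)=l+4, exactly one of the w's receives the label l/2+2, the other two w's receive the labels l+5 and l+6, and the v's receive the remaining labels {3,4,…,l+3}\{l/2+2}; that is, the additively graceful labeling of S(l,3) is unique up to permutation of labels among the u's, among the v's, and among the w's. -/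

import Mathlib

/-- A signed graph on vertex type `V`: a finite set of positive edges and a
finite set of negative edges, disjoint from one another, with no loops. -/
structure SignedGraph (V : Type) [DecidableEq V] where
  posEdges : Finset (Sym2 V)
  negEdges : Finset (Sym2 V)
  disjoint : Disjoint posEdges negEdges
  pos_not_diag : ∀ e ∈ posEdges, ¬ e.IsDiag
  neg_not_diag : ∀ e ∈ negEdges, ¬ e.IsDiag

/-- Induced label on a positive edge: `|f u - f v|`. -/
def posLabel {V : Type} (f : V → ℕ) : Sym2 V → ℕ :=
  Sym2.lift ⟨fun u v => Nat.dist (f u) (f v), fun u v => Nat.dist_comm _ _⟩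

/-- Induced label on a negative edge: `f u + f v`. -/
def negLabel {V : Type} (f : V → ℕ) : Sym2 V → ℕ :=
  Sym2.lift ⟨fun u v => f u + f v, fun u v => Nat.add_comm _ _⟩

/-- `f` is an additively graceful labeling of the signed graph `S`:
it is an injection into `{0, 1, …, m + ⌈(n+1)/2⌉}` whose induced labels on the
positive edges are exactly `{1, …, m}` and on the negative edges exactly
`{1, …, n}`, where `m` (resp. `n`) is the number of positive (negative) edges.
(Note that `⌈(n+1)/2⌉ = (n+2)/2` with natural-number division.) -/
def IsAddGraceful {V : Type} [DecidableEq V] (S : SignedGraph V) (f : V → ℕ) : Prop :=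
  Function.Injective f ∧
  (∀ v : V, f v ≤ S.posEdges.card + (S.negEdges.card + 2) / 2) ∧
  S.posEdges.image (posLabel f) = Finset.Icc 1 S.posEdges.card ∧
  S.negEdges.image (negLabel f) = Finset.Icc 1 S.negEdges.card

/-- Vertex type of a double star: the two centers `z₁, z₂`, the `a` positive
pendant neighbours and `b` negative pendant neighbours of `z₁`, and the `c`
positive pendant neighbours of `z₂`. -/
abbrev DSV (a b c : ℕ) : Type := (Unit ⊕ Unit) ⊕ (Fin a ⊕ Fin b ⊕ Fin c)

/-- the first central vertex `z₁` -/
def z1 {a b c : ℕ} : DSV a b c := Sum.inl (Sum.inl ())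
/-- the second central vertex `z₂` -/
def z2 {a b c : ℕ} : DSV a b c := Sum.inl (Sum.inr ())
/-- the end `vᵢ` of the `i`-th positive pendant edge at `z₁` -/
def vv {a b c : ℕ} (i : Fin a) : DSV a b c := Sum.inr (Sum.inl i)
/-- the end `uᵢ` of the `i`-th negative pendant edge at `z₁` -/
def uu {a b c : ℕ} (i : Fin b) : DSV a b c := Sum.inr (Sum.inr (Sum.inl i))
/-- the end `wᵢ` of the `i`-th positive pendant edge at `z₂` -/
def ww {a b c : ℕ} (i : Fin c) : DSV a b c := Sum.inr (Sum.inr (Sum.inr i))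

/-- The signed double star with a *positive* central edge `z₁z₂`,
`a` positive and `b` negative pendant edges at `z₁`, and `c` positive pendant
edges at `z₂`. -/
def doubleStarPos (a b c : ℕ) : SignedGraph (DSV a b c) where
  posEdges :=
    {s(z1, z2)} ∪ Finset.univ.image (fun i : Fin a => s(z1, vv i)) ∪
      Finset.univ.image (fun i : Fin c => s(z2, ww i))
  negEdges := Finset.univ.image (fun i : Fin b => s(z1, uu i))
  disjoint := by
    rw [Finset.disjoint_left]
    intro e he1 he2
    simp only [Finset.mem_union, Finset.mem_singleton, Finset.mem_image,
      Finset.mem_univ, true_and] at he1 he2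
    obtain ⟨j, rfl⟩ := he2
    rcases he1 with (h | ⟨i, h⟩) | ⟨i, h⟩ <;>
      simp [z1, z2, vv, uu, ww, Sym2.eq_iff] at h
  pos_not_diag := by
    intro e he
    simp only [Finset.mem_union, Finset.mem_singleton, Finset.mem_image,
      Finset.mem_univ, true_and] at he
    rcases he with (rfl | ⟨i, rfl⟩) | ⟨i, rfl⟩ <;>
      simp [z1, z2, vv, ww, Sym2.mk_isDiag_iff]
  neg_not_diag := by
    intro e he
    simp only [Finset.mem_image, Finset.mem_univ, true_and] at he
    obtain ⟨i, rfl⟩ := he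
    simp [z1, uu, Sym2.mk_isDiag_iff]

theorem ds_pos_card (l : ℕ) : (doubleStarPos l 2 3).posEdges.card = l + 4 := by
  unfold doubleStarPos
  simp only
  rw [Finset.card_union_of_disjoint, Finset.card_union_of_disjoint,
    Finset.card_image_of_injective, Finset.card_image_of_injective]
  · simp; omega
  · intro i j h
    simpa [z1, z2, vv, uu, ww, Sym2.eq_iff] using h
  · intro i j h
    simpa [z1, z2, vv, uu, ww, Sym2.eq_iff] using h
  · rw [Finset.disjoint_left]
    intro e he1 he2
    simp only [Finset.mem_singleton, Finset.mem_image,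
      Finset.mem_univ, true_and] at he1 he2
    obtain ⟨j, rfl⟩ := he2
    simp [z1, z2, vv, uu, ww, Sym2.eq_iff] at he1
  · rw [Finset.disjoint_left]
    intro e he1 he2
    simp only [Finset.mem_union, Finset.mem_singleton, Finset.mem_image,
      Finset.mem_univ, true_and] at he1 he2
    obtain ⟨j, rfl⟩ := he2
    rcases he1 with h | ⟨i, h⟩ <;>
      simp [z1, z2, vv, uu, ww, Sym2.eq_iff] at h

theorem ds_core (l t z a b x : ℕ) (hl : 2 ≤ l) (ht : l = t + t) (h1 : 3 ≤ z) (h2 : z ≤ l + 4)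
    (ha : a = l + 5) (hb : b = l + 6) (h3 : 3 ≤ x) (h4 : x ≤ l + 4) (h5 : z ≠ x)
    (k1 : z - a + (a - z) = 1 ∨ z - b + (b - z) = 1 ∨ z - x + (x - z) = 1)
    (k2 : z - a + (a - z) = 2 ∨ z - b + (b - z) = 2 ∨ z - x + (x - z) = 2)
    (k3 : z - a + (a - z) = x ∨ z - b + (b - z) = x ∨ z - x + (x - z) = x) :
    z = l + 4 ∧ x = t + 2 := by
  omega

theorem ds_neg_card (l : ℕ) : (doubleStarPos l 2 3).negEdges.card = 2 := by
  unfold doubleStarPos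
  simp only
  rw [Finset.card_image_of_injective]
  · simp
  · intro i j h
    simpa [z1, z2, vv, uu, ww, Sym2.eq_iff] using h

set_option maxHeartbeats 1000000 in
/-- For `l ≥ 2` even, every additively graceful labeling `g`
of the signed double star with positive central edge `z₁z₂`, `l` positive and
`2` negative pendant edges at `z₁`, and `3` positive pendant edges at `z₂`,
satisfies `g z₁ = 0`, `{g u₁, g u₂} = {1, 2}`, `g z₂ = l + 4`, the `w`'s receive
exactly the labels `{l/2 + 2, l + 5, l + 6}` and the `v`'s receive exactly the
remaining labels `{3, 4, …, l+3} \ {l/2 + 2}`; i.e. the labeling is unique up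
to permutations among the `u`'s, the `v`'s and the `w`'s. -/
theorem doubleStar_twoNeg_r3_unique (l : ℕ) (hl : 2 ≤ l) (hle : Even l)
    (g : DSV l 2 3 → ℕ) (hg : IsAddGraceful (doubleStarPos l 2 3) g) :
    g z1 = 0 ∧ ({g (uu 0), g (uu 1)} : Finset ℕ) = {1, 2} ∧ g z2 = l + 4 ∧
      Finset.univ.image (fun i : Fin 3 => g (ww i)) = {l / 2 + 2, l + 5, l + 6} ∧
      Finset.univ.image (fun i : Fin l => g (vv i)) =
        Finset.Icc 3 (l + 3) \ {l / 2 + 2} := by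
  obtain ⟨hinj, hle6, hpos, hneg⟩ := hg
  rw [ds_pos_card, ds_neg_card] at hle6
  rw [ds_pos_card] at hpos
  rw [ds_neg_card] at hneg
  have hsurj : ∀ k, k ≤ l + 6 → ∃ v, g v = k := by
    have himg : Finset.univ.image g = Finset.range (l + 7) := by
      apply Finset.eq_of_subset_of_card_le
      · intro x hx
        simp only [Finset.mem_image, Finset.mem_univ, true_and] at hx
        obtain ⟨v, rfl⟩ := hx
        have := hle6 v
        simp only [Finset.mem_range]; omega
      · rw [Finset.card_image_of_injective _ hinj]
        simp [DSV]; omega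
    intro k hk
    have : k ∈ Finset.univ.image g := by rw [himg]; simp; omega
    simpa using this
  have hsurj' : ∀ k, k ≤ l + 6 → g z1 = k ∨ g z2 = k ∨ (∃ i, g (vv i) = k) ∨
      g (uu 0) = k ∨ g (uu 1) = k ∨ g (ww 0) = k ∨ g (ww 1) = k ∨ g (ww 2) = k := by
    intro k hk
    obtain ⟨((_ | _) | (i | i | i)), hv⟩ := hsurj k hk
    · exact Or.inl hv
    · exact Or.inr (Or.inl hv)
    · exact Or.inr (Or.inr (Or.inl ⟨i, hv⟩))
    · fin_cases i
      · exact Or.inr (Or.inr (Or.inr (Or.inl hv)))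
      · exact Or.inr (Or.inr (Or.inr (Or.inr (Or.inl hv))))
    · fin_cases i
      · exact Or.inr (Or.inr (Or.inr (Or.inr (Or.inr (Or.inl hv)))))
      · exact Or.inr (Or.inr (Or.inr (Or.inr (Or.inr (Or.inr (Or.inl hv))))))
      · exact Or.inr (Or.inr (Or.inr (Or.inr (Or.inr (Or.inr (Or.inr hv))))))
  have hP : ∀ k, (Nat.dist (g z1) (g z2) = k ∨ (∃ i, Nat.dist (g z1) (g (vv i)) = k) ∨
      Nat.dist (g z2) (g (ww 0)) = k ∨ Nat.dist (g z2) (g (ww 1)) = k ∨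
      Nat.dist (g z2) (g (ww 2)) = k) ↔ 1 ≤ k ∧ k ≤ l + 4 := by
    intro k
    rw [← Finset.mem_Icc, ← hpos]
    simp only [doubleStarPos, Finset.image_union, Finset.image_singleton, Finset.image_image,
      Finset.mem_union, Finset.mem_singleton, Finset.mem_image, Finset.mem_univ, true_and,
      Function.comp, posLabel, Sym2.lift_mk, Fin.exists_fin_succ, Fin.exists_fin_zero]
    simp only [Fin.succ_zero_eq_one, Fin.succ_one_eq_two, or_false, or_assoc,
      eq_comm (a := k)]
  have hN : ∀ k, (g z1 + g (uu 0) = k ∨ g z1 + g (uu 1) = k) ↔ 1 ≤ k ∧ k ≤ 2 := by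
    intro k
    rw [← Finset.mem_Icc, ← hneg]
    simp only [doubleStarPos, Finset.image_image,
      Finset.mem_image, Finset.mem_univ, true_and,
      Function.comp, negLabel, Sym2.lift_mk, Fin.exists_fin_two]
  have ne : ∀ a b, a ≠ b → g a ≠ g b := fun a b h h' => h (hinj h')
  have n1 : g z1 ≠ g (uu 0) := ne _ _ (by simp [z1, uu])
  have n2 : g z1 ≠ g (uu 1) := ne _ _ (by simp [z1, uu])
  have n3 : g z2 ≠ g z1 := ne _ _ (by simp [z1, z2])
  have n4 : ∀ i, g z2 ≠ g (uu i) := fun i => ne _ _ (by simp [z2, uu])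
  have n5 : ∀ i, g z2 ≠ g (ww i) := fun i => ne _ _ (by simp [z2, ww])
  have n6 : ∀ i, g z2 ≠ g (vv i) := fun i => ne _ _ (by simp [z2, vv])
  have n7 : ∀ i j, g (ww i) ≠ g (vv j) := fun i j => ne _ _ (by simp [ww, vv])
  have n8 : ∀ i j, g (uu i) ≠ g (vv j) := fun i j => ne _ _ (by simp [uu, vv])
  have n9 : ∀ i j, g (ww i) ≠ g (uu j) := fun i j => ne _ _ (by simp [uu, ww])
  have n10 : ∀ i, g (ww i) ≠ g z1 := fun i => ne _ _ (by simp [z1, ww])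
  have n11 : ∀ i, g (vv i) ≠ g z1 := fun i => ne _ _ (by simp [z1, vv])
  have w01 : g (ww 0) ≠ g (ww 1) := ne _ _ (by simp [ww])
  have w02 : g (ww 0) ≠ g (ww 2) := ne _ _ (by simp [ww])
  have w12 : g (ww 1) ≠ g (ww 2) := ne _ _ (by simp [ww])
  have hN1 := (hN 1).2 (by omega)
  have hN2 := (hN 2).2 (by omega)
  have hz1 : g z1 = 0 := by omega
  have hu : (g (uu 0) = 1 ∧ g (uu 1) = 2) ∨ (g (uu 0) = 2 ∧ g (uu 1) = 1) := by omega
  have hz2 := (hP (g z2)).1 (Or.inl (by simp [hz1, Nat.dist]))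
  have hv : ∀ i, 3 ≤ g (vv i) ∧ g (vv i) ≤ l + 4 := by
    intro i
    have h1 := (hP (g (vv i))).1 (Or.inr (Or.inl ⟨i, by simp [hz1, Nat.dist]⟩))
    have h2 := n8 0 i
    have h3 := n8 1 i
    omega
  have hw : ∀ i, 3 ≤ g (ww i) ∧ g (ww i) ≤ l + 6 := by
    intro i
    have h1 := hle6 (ww i)
    have h2 := n9 i 0
    have h3 := n9 i 1
    have h4 := n10 i
    omega
  have hz23 : 3 ≤ g z2 := by
    have h2 := n4 0
    have h3 := n4 1
    omega
  have hb : ∀ k, l + 5 ≤ k → k ≤ l + 6 → g (ww 0) = k ∨ g (ww 1) = k ∨ g (ww 2) = k := by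
    intro k h1 h2
    rcases hsurj' k h2 with h | h | ⟨i, h⟩ | h | h | h
    · omega
    · omega
    · have := hv i; omega
    · omega
    · omega
    · exact h
  have hb5 := hb (l + 5) (by omega) (by omega)
  have hb6 := hb (l + 6) (by omega) (by omega)
  have cl : ∀ j, g (ww j) ≠ l + 5 → g (ww j) ≠ l + 6 → g (ww j) ≤ l + 4 := by
    intro j h1 h2
    have := hw j
    omega
  have lw : ∀ i j, i ≠ j → g (ww i) ≠ g (ww j) := fun i j h => ne _ _ (by simpa [ww] using h)
  -- a label in `1..l+4` missed by the centre and the `v`s is realised at some `w`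
  have key : ∀ k, 1 ≤ k → k ≤ l + 4 → (k ≠ g z2) → (∀ i, k ≠ g (vv i)) →
      Nat.dist (g z2) (g (ww 0)) = k ∨ Nat.dist (g z2) (g (ww 1)) = k ∨
      Nat.dist (g z2) (g (ww 2)) = k := by
    intro k h1 h2 h3 h4
    rcases (hP k).2 ⟨h1, h2⟩ with h | ⟨i, h⟩ | h
    · simp [hz1, Nat.dist] at h; omega
    · simp [hz1, Nat.dist] at h; exact absurd h.symm (h4 i)
    · exact h
  have k1 := key 1 (by omega) (by omega) (by omega) (fun i => by have := hv i; omega)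
  have k2 := key 2 (by omega) (by omega) (by omega) (fun i => by have := hv i; omega)
  have kw : ∀ j, g (ww j) ≤ l + 4 → _ := fun j hj =>
    key (g (ww j)) (by have := (hw j).1; clear k1 k2; omega) hj (n5 j).symm (n7 j)
  have kw0 := kw 0
  have kw1 := kw 1
  have kw2 := kw 2
  have m0 := n5 0
  have m1 := n5 1
  have m2 := n5 2
  have hw0 := hw 0
  have hw1 := hw 1
  have hw2 := hw 2
  obtain ⟨t, ht⟩ := hle
  simp only [Nat.dist] at k1 k2 kw0 kw1 kw2
  have main : g z2 = l + 4 ∧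
      ((g (ww 0) = t + 2 ∧ g (ww 1) = l + 5 ∧ g (ww 2) = l + 6) ∨
       (g (ww 0) = t + 2 ∧ g (ww 2) = l + 5 ∧ g (ww 1) = l + 6) ∨
       (g (ww 1) = t + 2 ∧ g (ww 0) = l + 5 ∧ g (ww 2) = l + 6) ∨
       (g (ww 1) = t + 2 ∧ g (ww 2) = l + 5 ∧ g (ww 0) = l + 6) ∨
       (g (ww 2) = t + 2 ∧ g (ww 0) = l + 5 ∧ g (ww 1) = l + 6) ∨
       (g (ww 2) = t + 2 ∧ g (ww 1) = l + 5 ∧ g (ww 0) = l + 6)) := by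
    clear hb key kw hsurj hsurj' hP hN
    rcases hb5 with h5 | h5 | h5 <;> rcases hb6 with h6 | h6 | h6
    · rw [h5] at h6; exact absurd h6 (by simp)
    · have hx := cl 2 (by rw [← h5]; exact lw _ _ (by decide)) (by rw [← h6]; exact lw _ _ (by decide))
      obtain ⟨e1, e2⟩ := ds_core l t _ _ _ _ hl ht hz23 hz2.2 h5 h6 hw2.1 hx m2 k1 k2 (kw2 hx)
      exact ⟨e1, by simp [e2, h5, h6]⟩
    · have hx := cl 1 (by rw [← h5]; exact lw _ _ (by decide)) (by rw [← h6]; exact lw _ _ (by decide))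
      obtain ⟨e1, e2⟩ := ds_core l t _ _ _ _ hl ht hz23 hz2.2 h5 h6 hw1.1 hx m1
        (k1.imp_right Or.symm) (k2.imp_right Or.symm) ((kw1 hx).imp_right Or.symm)
      exact ⟨e1, by simp [e2, h5, h6]⟩
    · have hx := cl 2 (by rw [← h5]; exact lw _ _ (by decide)) (by rw [← h6]; exact lw _ _ (by decide))
      obtain ⟨e1, e2⟩ := ds_core l t _ _ _ _ hl ht hz23 hz2.2 h5 h6 hw2.1 hx m2
        (or_left_comm.1 (k1)) (or_left_comm.1 (k2)) (or_left_comm.1 (kw2 hx))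
      exact ⟨e1, by simp [e2, h5, h6]⟩
    · rw [h5] at h6; exact absurd h6 (by simp)
    · have hx := cl 0 (by rw [← h5]; exact lw _ _ (by decide)) (by rw [← h6]; exact lw _ _ (by decide))
      obtain ⟨e1, e2⟩ := ds_core l t _ _ _ _ hl ht hz23 hz2.2 h5 h6 hw0.1 hx m0
        (or_rotate.1 (k1)) (or_rotate.1 (k2)) (or_rotate.1 (kw0 hx))
      exact ⟨e1, by simp [e2, h5, h6]⟩
    · have hx := cl 1 (by rw [← h5]; exact lw _ _ (by decide)) (by rw [← h6]; exact lw _ _ (by decide))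
      obtain ⟨e1, e2⟩ := ds_core l t _ _ _ _ hl ht hz23 hz2.2 h5 h6 hw1.1 hx m1
        (or_rotate.2 (k1)) (or_rotate.2 (k2)) (or_rotate.2 (kw1 hx))
      exact ⟨e1, by simp [e2, h5, h6]⟩
    · have hx := cl 0 (by rw [← h5]; exact lw _ _ (by decide)) (by rw [← h6]; exact lw _ _ (by decide))
      obtain ⟨e1, e2⟩ := ds_core l t _ _ _ _ hl ht hz23 hz2.2 h5 h6 hw0.1 hx m0
        (or_left_comm.1 (or_rotate.1 (k1))) (or_left_comm.1 (or_rotate.1 (k2))) (or_left_comm.1 (or_rotate.1 (kw0 hx)))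
      exact ⟨e1, by simp [e2, h5, h6]⟩
    · rw [h5] at h6; exact absurd h6 (by simp)
  clear k1 k2 kw0 kw1 kw2 hb5 hb6 hN1 hN2
  have hlt : l / 2 + 2 = t + 2 := by omega
  rw [hlt]
  obtain ⟨hz, hcase⟩ := main
  refine ⟨hz1, ?_, hz, ?_, ?_⟩
  · ext k
    simp only [Finset.mem_insert, Finset.mem_singleton]
    omega
  · ext k
    simp only [Finset.mem_image, Finset.mem_univ, true_and, Fin.exists_fin_succ,
      Fin.exists_fin_zero, Fin.succ_zero_eq_one, Fin.succ_one_eq_two, or_false,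
      Finset.mem_insert, Finset.mem_singleton]
    omega
  · ext k
    simp only [Finset.mem_image, Finset.mem_univ, true_and, Finset.mem_sdiff, Finset.mem_Icc,
      Finset.mem_singleton]
    constructor
    · rintro ⟨i, rfl⟩
      have h1 := hv i
      have h2 := n6 i
      have h3 := n7 0 i
      have h4 := n7 1 i
      have h5 := n7 2 i
      omega
    · rintro ⟨⟨h1, h2⟩, h3⟩
      rcases hsurj' k (by omega) with h | h | h | h
      · omega
      · omega
      · exact h
      · omega
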